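/- arXiv:2111.06842 — 6 statements merged into one kernel-verified Lean document; each statement's English description precedes it below -/
import Mathlib

section
/- Let A be an n×m real matrix with entries a_{ij} ∈ [0,1], let c ∈ ℝ^m with c ≥ 0 componentwise, and let β > 0. Suppose x* ∈ ℝ^m satisfies x* ≥ 0, A x* ≥ 1 componentwise, ⟨c, x*⟩ ≤ β, and x* is optimal, i.e. ⟨c, x*⟩ ≤ ⟨c, x⟩ for every x ∈ ℝ^m with x ≥ 0 and A x ≥ 1. Then x*_j = 0 for every index j with c_j > β. -/
open Finset

/-!
For `t ≥ 0` the vector `x + t • (x - eⱼ)` satisfies `A y ≥ 1` again: row `i` gains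
`t * ((A x) i - A i j)`, and `(A x) i ≥ 1 ≥ A i j`. The step `t = x j` keeps the vector
nonnegative and changes the cost by `x j * (⟨c, x⟩ - c j)`, which optimality forces to be
nonnegative. Hence `x j > 0` is impossible when `c j > ⟨c, x⟩`.
-/

section Covering

open Matrix

variable {ι κ R : Type*} [CommRing R] [PartialOrder R]

theorem add_smul_sub_single_nonneg [DecidableEq κ] [IsOrderedRing R] {x : κ → R}
    (hx : 0 ≤ x) (j : κ) : 0 ≤ x + x j • (x - Pi.single j 1) := by
  have hsingle : Pi.single j (x j) ≤ x := by
    intro k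
    obtain rfl | hk := eq_or_ne k j
    · rw [Pi.single_eq_same]
    · rw [Pi.single_eq_of_ne hk]
      exact hx k
  calc
    0 ≤ (x - Pi.single j (x j)) + x j • x :=
      add_nonneg (sub_nonneg.2 hsingle) (smul_nonneg (hx j) hx)
    _ = x + x j • (x - Pi.single j 1) := by
      rw [smul_sub, ← Pi.single_smul, smul_eq_mul, mul_one]
      abel

theorem one_le_mulVec_add_smul_sub_single [Fintype κ] [DecidableEq κ] [IsOrderedRing R]
    {A : Matrix ι κ R} {j : κ} (hA : A.col j ≤ 1) {x : κ → R} (hx : 1 ≤ A *ᵥ x)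
    {t : R} (ht : 0 ≤ t) :
    1 ≤ A *ᵥ (x + t • (x - Pi.single j 1)) := by
  rw [mulVec_add, mulVec_smul, mulVec_sub, mulVec_single_one]
  exact le_add_of_le_of_nonneg hx (smul_nonneg ht (sub_nonneg.2 (hA.trans hx)))

theorem stmt_0_general [Fintype κ] [IsStrictOrderedRing R] {A : Matrix ι κ R} {c x : κ → R}
    {j : κ} (hA : A.col j ≤ 1) (hx_nonneg : 0 ≤ x) (hx_feas : 1 ≤ A *ᵥ x)
    (hx_opt : ∀ y, 0 ≤ y → 1 ≤ A *ᵥ y → c ⬝ᵥ x ≤ c ⬝ᵥ y) (hj : c ⬝ᵥ x < c j) :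
    x j = 0 := by
  classical
  by_contra hne
  have hpos : 0 < x j := (hx_nonneg j).lt_of_ne' hne
  have hstep : c ⬝ᵥ x ≤ c ⬝ᵥ (x + x j • (x - Pi.single j 1)) :=
    hx_opt _ (add_smul_sub_single_nonneg hx_nonneg j)
      (one_le_mulVec_add_smul_sub_single hA hx_feas hpos.le)
  have hgain : 0 ≤ x j * (c ⬝ᵥ x - c j) := by
    simpa only [dotProduct_add, dotProduct_smul, dotProduct_sub, dotProduct_single_one,
      smul_eq_mul, le_add_iff_nonneg_right] using hstep
  exact hgain.not_gt (mul_neg_of_pos_of_neg hpos (sub_neg.2 hj))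

end Covering

/-- Every pure covering LP `min {⟨c,x⟩ : Ax ≥ 1, x ≥ 0}` with costs `c ≥ 0` and matrix
entries in `[0,1]` has every optimal solution of cost at most `β` supported on columns
of cost at most `β`. -/
theorem stmt_0 (n m : ℕ) (A : Fin n → Fin m → ℝ) (c : Fin m → ℝ) (β : ℝ)
    (hA : ∀ i j, A i j ∈ Set.Icc (0 : ℝ) 1)
    (hc : ∀ j, 0 ≤ c j) (hβ : 0 < β)
    (xstar : Fin m → ℝ)
    (hx_nonneg : ∀ j, 0 ≤ xstar j)
    (hx_feas : ∀ i, 1 ≤ ∑ j, A i j * xstar j)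
    (hx_cost : ∑ j, c j * xstar j ≤ β)
    (hx_opt : ∀ x : Fin m → ℝ, (∀ j, 0 ≤ x j) → (∀ i, 1 ≤ ∑ j, A i j * x j) →
      ∑ j, c j * xstar j ≤ ∑ j, c j * x j) :
    ∀ j, β < c j → xstar j = 0 := by
  intro j hj
  exact stmt_0_general (fun i => (hA i j).2) hx_nonneg hx_feas hx_opt (hx_cost.trans_lt hj)
end

section
/- Let c ∈ ℝ^m with c_j > 0 for all j, let β > 0, let m' := |{j : c_j ≤ β}| and assume m' ≥ 1, and define x⁰ ∈ ℝ^m by x⁰_j = β/(c_j·m') if c_j ≤ β and x⁰_j = 0 otherwise. Let x* ∈ ℝ^m with x* ≥ 0, ⟨c, x*⟩ ≤ β, and x*_j = 0 whenever c_j > β. Then KL_c(x* ‖ x⁰) ≤ β·(log m + 1). Moreover, if U is a finite nonempty set of size n and κ_u ∈ (0, β] for every u ∈ U, then β·log(Σ_{u∈U} κ_u / β) ≤ β·log n; consequently 2·KL_c(x* ‖ x⁰) + 2e·β·log(Σ_{u∈U} κ_u / β) ≤ 2β(log m + 1) + 2e·β·log n. -/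
open Finset Real

/-- Weighted KL divergence `KL_c(x ‖ y) = ∑ⱼ cⱼ·(xⱼ·log(xⱼ/yⱼ) − xⱼ + yⱼ)`
(with the convention `0·log 0 = 0`, which is automatic for `Real.log`). -/
noncomputable def wKL {m : ℕ} (c x y : Fin m → ℝ) : ℝ :=
  ∑ j, c j * (x j * Real.log (x j / y j) - x j + y j)

/-!
Spending the budget evenly over `S` gives `x⁰` with `cⱼ·x⁰ⱼ = β/|S|`, whereas any allocation of cost
at most `β` has `cⱼ·xⱼ ≤ β`. Hence `x ≤ |S|·x⁰` coordinatewise for every feasible `x` supported on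
`S`, so each logarithm in `KL_c(x ‖ x⁰)` is at most `log |S|`. The weights `cⱼ·xⱼ` of these
logarithms sum to at most `β`, and the mass `⟨c, x⁰⟩ = β` accounts for the remaining `+ 1`.
-/

/-- The allocation that splits a budget `β` evenly over the coordinates in `S` at unit prices `c`:
each `j ∈ S` receives the amount whose cost is `β / |S|`. For `S = {j | c j ≤ β}` it is the
reference point `x⁰` of the KL divergence. -/
noncomputable def evenAllocation {ι : Type*} [DecidableEq ι] (c : ι → ℝ) (β : ℝ) (S : Finset ι)
    (j : ι) : ℝ :=
  if j ∈ S then β / (c j * #S) else 0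

section EvenAllocation

variable {ι : Type*} [DecidableEq ι] {c x : ι → ℝ} {β : ℝ} {S : Finset ι} {j : ι}

theorem mul_evenAllocation_of_mem (hj : j ∈ S) (hc : c j ≠ 0) :
    c j * evenAllocation c β S j = β / #S := by
  rw [evenAllocation, if_pos hj, ← mul_div_assoc, mul_div_mul_left _ _ hc]

theorem evenAllocation_of_notMem (hj : j ∉ S) : evenAllocation c β S j = 0 :=
  if_neg hj

variable [Fintype ι]

theorem sum_mul_evenAllocation (hS : S.Nonempty) (hc : ∀ j ∈ S, c j ≠ 0) :
    ∑ j, c j * evenAllocation c β S j = β := by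
  have hcard : (#S : ℝ) ≠ 0 := Nat.cast_ne_zero.mpr hS.card_ne_zero
  calc ∑ j, c j * evenAllocation c β S j
      = ∑ j ∈ S, c j * evenAllocation c β S j :=
        (sum_subset S.subset_univ fun j _ hj => by
          rw [evenAllocation_of_notMem hj, mul_zero]).symm
    _ = ∑ _j ∈ S, β / #S := sum_congr rfl fun j hj => mul_evenAllocation_of_mem hj (hc j hj)
    _ = β := by rw [sum_const, nsmul_eq_mul, mul_div_cancel₀ _ hcard]

theorem le_card_mul_evenAllocation (hc : ∀ j, 0 < c j) (hx : ∀ j, 0 ≤ x j)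
    (hcost : ∑ j, c j * x j ≤ β) (hsupp : ∀ j ∉ S, x j = 0) (j : ι) :
    x j ≤ #S * evenAllocation c β S j := by
  by_cases hj : j ∈ S
  · have hcard : (#S : ℝ) ≠ 0 := Nat.cast_ne_zero.mpr (card_ne_zero_of_mem hj)
    refine le_of_mul_le_mul_left ?_ (hc j)
    calc c j * x j
        ≤ ∑ i, c i * x i :=
          single_le_sum (f := fun i => c i * x i) (fun i _ => mul_nonneg (hc i).le (hx i))
            (mem_univ j)
      _ ≤ β := hcost
      _ = #S * (c j * evenAllocation c β S j) := by
          rw [mul_evenAllocation_of_mem hj (hc j).ne', mul_div_cancel₀ _ hcard]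
      _ = c j * (#S * evenAllocation c β S j) := mul_left_comm _ _ _
  · rw [hsupp j hj, evenAllocation_of_notMem hj, mul_zero]

end EvenAllocation

theorem mul_log_div_le_mul_log {a b M : ℝ} (ha : 0 ≤ a) (hM : 0 ≤ M) (hab : a ≤ M * b) :
    a * log (a / b) ≤ a * log M := by
  rcases ha.eq_or_lt with rfl | ha
  · simp
  · have hb : 0 < b := pos_of_mul_pos_right (ha.trans_le hab) hM
    have hratio : a / b ≤ M := (div_le_iff₀ hb).mpr hab
    exact mul_le_mul_of_nonneg_left (log_le_log (div_pos ha hb) hratio) ha.le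

section WeightedKL

variable {m : ℕ} {c x y : Fin m → ℝ} {β M : ℝ}

theorem wKL_le_of_le_mul (hc : ∀ j, 0 ≤ c j) (hx : ∀ j, 0 ≤ x j) (hM : 0 ≤ M)
    (hxy : ∀ j, x j ≤ M * y j) :
    wKL c x y ≤ (∑ j, c j * x j) * (log M - 1) + ∑ j, c j * y j := by
  rw [wKL, sum_mul, ← sum_add_distrib]
  refine sum_le_sum fun j _ => ?_
  calc c j * (x j * log (x j / y j) - x j + y j)
      ≤ c j * (x j * log M - x j + y j) := by
        gcongr c j * (?_ - x j + y j)
        exacts [hc j, mul_log_div_le_mul_log (hx j) hM (hxy j)]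
    _ = c j * x j * (log M - 1) + c j * y j := by ring

theorem wKL_evenAllocation_le {S : Finset (Fin m)} (hS : S.Nonempty) (hc : ∀ j, 0 < c j)
    (hx : ∀ j, 0 ≤ x j) (hcost : ∑ j, c j * x j ≤ β) (hsupp : ∀ j ∉ S, x j = 0) :
    wKL c x (evenAllocation c β S) ≤ β * (log #S + 1) := by
  have hcost_nonneg : 0 ≤ ∑ j, c j * x j := sum_nonneg fun j _ => mul_nonneg (hc j).le (hx j)
  calc wKL c x (evenAllocation c β S)
      ≤ (∑ j, c j * x j) * (log #S - 1) + ∑ j, c j * evenAllocation c β S j :=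
        wKL_le_of_le_mul (fun j => (hc j).le) hx (Nat.cast_nonneg _)
          (le_card_mul_evenAllocation hc hx hcost hsupp)
    _ = (∑ j, c j * x j) * (log #S - 1) + β := by
        rw [sum_mul_evenAllocation hS fun j _ => (hc j).ne']
    _ ≤ (∑ j, c j * x j) * log #S + β := by linarith
    _ ≤ β * log #S + β := by gcongr
    _ = β * (log #S + 1) := by ring

end WeightedKL

theorem log_sum_div_le_log_card {V : Type*} {U : Finset V} {κ : V → ℝ} {β : ℝ}
    (hsum : 0 < ∑ u ∈ U, κ u) (hκ : ∀ u ∈ U, κ u ≤ β) :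
    log ((∑ u ∈ U, κ u) / β) ≤ log #U := by
  have hle : ∑ u ∈ U, κ u ≤ #U * β := by
    simpa only [nsmul_eq_mul] using sum_le_card_nsmul U κ β hκ
  have hβ : 0 < β := pos_of_mul_pos_right (hsum.trans_le hle) (Nat.cast_nonneg _)
  exact log_le_log (div_pos hsum hβ) ((div_le_iff₀ hβ).mpr hle)

/-- Bound on the initial potential: `KL_c(x* ‖ x⁰) ≤ β(log m + 1)`,
`β·log(∑_{u∈U} κ_u/β) ≤ β·log n`, and the combined bound
`2·KL_c(x* ‖ x⁰) + 2e·β·log(∑ κ_u/β) ≤ 2β(log m + 1) + 2e·β·log n`. -/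
theorem stmt_4 (m : ℕ) (c : Fin m → ℝ) (hc : ∀ j, 0 < c j) (β : ℝ) (hβ : 0 < β)
    (m' : ℕ) (hm' : m' = (Finset.univ.filter (fun j => c j ≤ β)).card) (hm'pos : 1 ≤ m')
    (x0 : Fin m → ℝ)
    (hx0 : ∀ j, x0 j = if c j ≤ β then β / (c j * m') else 0)
    (xstar : Fin m → ℝ) (hxstar_nonneg : ∀ j, 0 ≤ xstar j)
    (hxstar_cost : ∑ j, c j * xstar j ≤ β)
    (hxstar_supp : ∀ j, β < c j → xstar j = 0)
    {V : Type*} (U : Finset V) (hU : U.Nonempty) (n : ℕ) (hn : n = U.card)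
    (κ : V → ℝ) (hκ : ∀ u ∈ U, κ u ∈ Set.Ioc (0 : ℝ) β) :
    wKL c xstar x0 ≤ β * (Real.log m + 1) ∧
    β * Real.log ((∑ u ∈ U, κ u) / β) ≤ β * Real.log n ∧
    2 * wKL c xstar x0 + 2 * Real.exp 1 * β * Real.log ((∑ u ∈ U, κ u) / β) ≤
      2 * β * (Real.log m + 1) + 2 * Real.exp 1 * β * Real.log n := by
  subst hm' hn
  set S : Finset (Fin m) := univ.filter fun j => c j ≤ β
  have hx0_even : x0 = evenAllocation c β S := by
    ext j
    simp only [hx0, evenAllocation, S, mem_filter_univ]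
  have hS : S.Nonempty := card_pos.mp hm'pos
  have hsupp : ∀ j ∉ S, xstar j = 0 := fun j hj =>
    hxstar_supp j (by simpa only [S, mem_filter_univ, not_le] using hj)
  have hKL : wKL c xstar x0 ≤ β * (log m + 1) :=
    calc wKL c xstar x0
        ≤ β * (log #S + 1) :=
          hx0_even ▸ wKL_evenAllocation_le hS hc hxstar_nonneg hxstar_cost hsupp
      _ ≤ β * (log m + 1) := by
          gcongr
          simpa only [Fintype.card_fin] using S.card_le_univ
  have hlog : β * log ((∑ u ∈ U, κ u) / β) ≤ β * log #U :=
    mul_le_mul_of_nonneg_left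
      (log_sum_div_le_log_card (sum_pos (fun u hu => (hκ u hu).1) hU) fun u hu => (hκ u hu).2) hβ.le
  exact ⟨hKL, hlog, by linear_combination 2 * hKL + 2 * exp 1 * hlog⟩
end

section
/- Let 𝒮 be a finite collection of m sets over a ground set, each set S having a cost c_S > 0, and let β > 0. Let x ∈ ℝ^𝒮_{≥0} satisfy ⟨c, x⟩ = β. Let v be an element contained in at least one set of 𝒮, let κ_v := min{c_S : S ∋ v}, and suppose X_v := Σ_{S ∋ v} x_S < 1. Define x' by x'_S := x_S·exp(𝟙[S ∋ v]·κ_v/c_S)/Z, where Z := (1/β)·Σ_S c_S·x_S·exp(𝟙[S ∋ v]·κ_v/c_S). Then for every x* ∈ ℝ^𝒮_{≥0} with ⟨c, x*⟩ ≤ β, Σ_{S ∋ v} x*_S ≥ 1, and x*_S = 0 whenever x_S = 0, it holds that KL_c(x* ‖ x') − KL_c(x* ‖ x) ≤ (e−1)·κ_v·X_v − κ_v. -/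
open Finset Real
open scoped Classical

/-!
Write `a S` for the exponent of the update and `Z` for its normalizer. Since `x'` has the same cost
as `x`, the change of the divergence is exactly `log Z * ⟨c, x*⟩ - ∑ S, c S * x* S * a S`. For
exponents in `[0, 1]` we have `Z ≥ 1`, so the first term is at most `β * (Z - 1)` because
`⟨c, x*⟩ ≤ β` and `log Z ≤ Z - 1`, and bounding `exp` by its chord on `[0, 1]` turns this into
`(e - 1) * ∑ S, c S * x S * a S`. The exponent `κ / c S` on the sets containing `v` is chosen so
that the weights `c S` cancel: both sums become `κ` times the coverage of `v`.
-/

theorem exp_sub_one_le_mul {t : ℝ} (ht₀ : 0 ≤ t) (ht₁ : t ≤ 1) :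
    exp t - 1 ≤ (exp 1 - 1) * t := by
  have chord := convexOn_exp.2 (Set.mem_univ 0) (Set.mem_univ 1) (sub_nonneg.2 ht₁) ht₀
    (sub_add_cancel 1 t)
  simp only [smul_eq_mul, mul_zero, mul_one, zero_add, exp_zero] at chord
  linarith

theorem mul_log_div_mul_exp_div {p y a Z : ℝ} (hZ : Z ≠ 0) (hsupp : y = 0 → p = 0) :
    p * log (p / (y * exp a / Z)) = p * log (p / y) + p * (log Z - a) := by
  rcases eq_or_ne p 0 with rfl | hp
  · simp
  · have hy : y ≠ 0 := mt hsupp hp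
    have ratio : p / (y * exp a / Z) = p / y * (Z / exp a) := by field_simp
    rw [ratio, log_mul (div_ne_zero hp hy) (div_ne_zero hZ (exp_ne_zero a)),
      log_div hZ (exp_ne_zero a), log_exp]
    ring

section MultiplicativeWeights

variable {ι : Type*} [Fintype ι] {c x a : ι → ℝ}

/-- The normalizer `Z` of a multiplicative-weights step with exponents `a`: the ratio of the cost
`⟨c, ·⟩` of `S ↦ x S * exp (a S)` to that of `x`. The cost of `x` plays the role of the budget `β`
of the paper; if it is `0`, the value is `0`. -/
noncomputable def mwNormalizer (c x a : ι → ℝ) : ℝ :=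
  (∑ S, c S * x S * exp (a S)) / ∑ S, c S * x S

/-- The multiplicative-weights update of `x` with exponents `a`, renormalized to have the same cost
`⟨c, ·⟩` as `x`. -/
noncomputable def mwUpdate (c x a : ι → ℝ) (S : ι) : ℝ :=
  x S * exp (a S) / mwNormalizer c x a

theorem sum_mul_mwNormalizer (hcost : ∑ S, c S * x S ≠ 0) :
    (∑ S, c S * x S) * mwNormalizer c x a = ∑ S, c S * x S * exp (a S) :=
  mul_div_cancel₀ _ hcost

theorem sum_mul_mwUpdate (hZ : mwNormalizer c x a ≠ 0) :
    ∑ S, c S * mwUpdate c x a S = ∑ S, c S * x S := by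
  have hcost : ∑ S, c S * x S ≠ 0 := (div_ne_zero_iff.1 hZ).2
  calc ∑ S, c S * mwUpdate c x a S
      = (∑ S, c S * x S * exp (a S)) / mwNormalizer c x a := by
        simp only [mwUpdate, sum_div, mul_div_assoc, mul_assoc]
    _ = ∑ S, c S * x S := by
        rw [← sum_mul_mwNormalizer hcost, mul_div_cancel_right₀ _ hZ]

theorem one_le_mwNormalizer (hc : ∀ S, 0 ≤ c S) (hx : ∀ S, 0 ≤ x S)
    (hcost : 0 < ∑ S, c S * x S) (ha : ∀ S, 0 ≤ a S) : 1 ≤ mwNormalizer c x a :=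
  (one_le_div hcost).2 <| sum_le_sum fun S _ ↦
    le_mul_of_one_le_right (mul_nonneg (hc S) (hx S)) (one_le_exp (ha S))

theorem sum_mul_mwNormalizer_sub_one_le (hc : ∀ S, 0 ≤ c S) (hx : ∀ S, 0 ≤ x S)
    (hcost : ∑ S, c S * x S ≠ 0) (ha₀ : ∀ S, 0 ≤ a S) (ha₁ : ∀ S, a S ≤ 1) :
    (∑ S, c S * x S) * (mwNormalizer c x a - 1) ≤ (exp 1 - 1) * ∑ S, c S * x S * a S :=
  calc (∑ S, c S * x S) * (mwNormalizer c x a - 1)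
      = ∑ S, c S * x S * (exp (a S) - 1) := by
        simp only [mul_sub, mul_one, sum_sub_distrib, sum_mul_mwNormalizer hcost]
    _ ≤ ∑ S, c S * x S * ((exp 1 - 1) * a S) := sum_le_sum fun S _ ↦
        mul_le_mul_of_nonneg_left (exp_sub_one_le_mul (ha₀ S) (ha₁ S))
          (mul_nonneg (hc S) (hx S))
    _ = (exp 1 - 1) * ∑ S, c S * x S * a S := by
        simp only [mul_sum, mul_left_comm]

end MultiplicativeWeights

theorem sum_mul_mul_ite_div {ι : Type*} [Fintype ι] [DecidableEq ι] {c : ι → ℝ}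
    {T : Finset ι} (hc : ∀ S ∈ T, c S ≠ 0) (x : ι → ℝ) (κ : ℝ) :
    ∑ S, c S * x S * (if S ∈ T then κ / c S else 0) = κ * ∑ S ∈ T, x S := by
  simp only [mul_ite, mul_zero, sum_ite_mem, univ_inter, mul_sum]
  refine sum_congr rfl fun S hS ↦ ?_
  have := hc S hS
  field_simp

section Divergence

variable {m : ℕ} {c x p a : Fin m → ℝ}

theorem wKL_mwUpdate_sub (hZ : mwNormalizer c x a ≠ 0) (hsupp : ∀ S, x S = 0 → p S = 0) :
    wKL c p (mwUpdate c x a) - wKL c p x =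
      log (mwNormalizer c x a) * ∑ S, c S * p S - ∑ S, c S * p S * a S := by
  have summand (S : Fin m) :
      c S * (p S * log (p S / mwUpdate c x a S) - p S + mwUpdate c x a S) -
          c S * (p S * log (p S / x S) - p S + x S) =
        log (mwNormalizer c x a) * (c S * p S) - c S * p S * a S +
          (c S * mwUpdate c x a S - c S * x S) := by
    rw [mwUpdate, mul_log_div_mul_exp_div hZ (hsupp S)]
    ring
  simp only [wKL, ← sum_sub_distrib, summand]
  simp only [sum_add_distrib, sum_sub_distrib, ← mul_sum, sum_mul_mwUpdate hZ, sub_self, add_zero]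

theorem wKL_mwUpdate_sub_le (hc : ∀ S, 0 ≤ c S) (hx : ∀ S, 0 ≤ x S)
    (hcost : 0 < ∑ S, c S * x S) (ha₀ : ∀ S, 0 ≤ a S) (ha₁ : ∀ S, a S ≤ 1)
    (hp_cost : ∑ S, c S * p S ≤ ∑ S, c S * x S) (hsupp : ∀ S, x S = 0 → p S = 0) :
    wKL c p (mwUpdate c x a) - wKL c p x ≤
      (exp 1 - 1) * ∑ S, c S * x S * a S - ∑ S, c S * p S * a S := by
  have one_le_Z := one_le_mwNormalizer hc hx hcost ha₀
  have Z_pos := one_pos.trans_le one_le_Z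
  rw [wKL_mwUpdate_sub Z_pos.ne' hsupp]
  refine sub_le_sub_right ?_ _
  calc log (mwNormalizer c x a) * ∑ S, c S * p S
      ≤ log (mwNormalizer c x a) * ∑ S, c S * x S :=
        mul_le_mul_of_nonneg_left hp_cost (log_nonneg one_le_Z)
    _ ≤ (mwNormalizer c x a - 1) * ∑ S, c S * x S :=
        mul_le_mul_of_nonneg_right (log_le_sub_one_of_pos Z_pos) hcost.le
    _ = (∑ S, c S * x S) * (mwNormalizer c x a - 1) := mul_comm _ _
    _ ≤ (exp 1 - 1) * ∑ S, c S * x S * a S :=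
        sum_mul_mwNormalizer_sub_one_le hc hx hcost.ne' ha₀ ha₁

theorem stmt_5_general (hc : ∀ S, 0 < c S) (hx : ∀ S, 0 ≤ x S) (hcost : 0 < ∑ S, c S * x S)
    {T : Finset (Fin m)} {κ : ℝ} (hκ : 0 ≤ κ) (hκc : ∀ S ∈ T, κ ≤ c S)
    (_hp : ∀ S, 0 ≤ p S) (hp_cost : ∑ S, c S * p S ≤ ∑ S, c S * x S)
    (hp_cover : 1 ≤ ∑ S ∈ T, p S) (hp_supp : ∀ S, x S = 0 → p S = 0) :
    wKL c p (mwUpdate c x fun S ↦ if S ∈ T then κ / c S else 0) - wKL c p x ≤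
      (exp 1 - 1) * κ * ∑ S ∈ T, x S - κ := by
  have ha₀ (S) : 0 ≤ if S ∈ T then κ / c S else 0 :=
    ite_nonneg (div_nonneg hκ (hc S).le) le_rfl
  have ha₁ (S) : (if S ∈ T then κ / c S else 0) ≤ 1 := by
    split_ifs with hS
    · exact div_le_one_of_le₀ (hκc S hS) (hc S).le
    · exact zero_le_one
  have sum_exponent (y : Fin m → ℝ) := sum_mul_mul_ite_div (fun S (_ : S ∈ T) ↦ (hc S).ne') y κ
  calc wKL c p (mwUpdate c x fun S ↦ if S ∈ T then κ / c S else 0) - wKL c p x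
      ≤ (exp 1 - 1) * (κ * ∑ S ∈ T, x S) - κ * ∑ S ∈ T, p S := by
        simpa only [sum_exponent] using
          wKL_mwUpdate_sub_le (fun S ↦ (hc S).le) hx hcost ha₀ ha₁ hp_cost hp_supp
    _ ≤ (exp 1 - 1) * κ * ∑ S ∈ T, x S - κ := by
        rw [mul_assoc]
        gcongr
        exact le_mul_of_one_le_right hκ hp_cover

end Divergence

/-- Change in KL under the multiplicative-weights update of `LearnOrCover` upon arrival of
an uncovered element `v` with `X_v = ∑_{S ∋ v} x_S < 1`:
`KL_c(x* ‖ x') − KL_c(x* ‖ x) ≤ (e−1)·κ_v·X_v − κ_v`. -/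
theorem stmt_5 {V : Type*} (m : ℕ) (Sets : Fin m → Set V) (c : Fin m → ℝ)
    (hc : ∀ S, 0 < c S) (β : ℝ) (hβ : 0 < β)
    (x : Fin m → ℝ) (hx_nonneg : ∀ S, 0 ≤ x S) (hx_cost : ∑ S, c S * x S = β)
    (v : V) (hv : ∃ S, v ∈ Sets S)
    (κv : ℝ) (hκv : IsLeast {r : ℝ | ∃ S, v ∈ Sets S ∧ c S = r} κv)
    (Xv : ℝ) (hXv : Xv = ∑ S, if v ∈ Sets S then x S else 0) (hXv1 : Xv < 1)
    (Z : ℝ) (hZ : Z = (1 / β) * ∑ S, c S * x S * Real.exp (if v ∈ Sets S then κv / c S else 0))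
    (x' : Fin m → ℝ)
    (hx' : ∀ S, x' S = x S * Real.exp (if v ∈ Sets S then κv / c S else 0) / Z)
    (xstar : Fin m → ℝ) (hxstar_nonneg : ∀ S, 0 ≤ xstar S)
    (hxstar_cost : ∑ S, c S * xstar S ≤ β)
    (hxstar_cover : 1 ≤ ∑ S, if v ∈ Sets S then xstar S else 0)
    (hxstar_supp : ∀ S, x S = 0 → xstar S = 0) :
    wKL c xstar x' - wKL c xstar x ≤ (Real.exp 1 - 1) * κv * Xv - κv := by
  obtain ⟨⟨S₀, -, rfl⟩, hmin⟩ := hκv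
  obtain rfl : x' = mwUpdate c x fun S ↦
      if S ∈ univ.filter (v ∈ Sets ·) then c S₀ / c S else 0 := funext fun S ↦ by
    simp [hx', hZ, ← hx_cost, mwUpdate, mwNormalizer, div_eq_inv_mul]
  simpa only [hXv, sum_filter] using stmt_5_general hc hx_nonneg (hx_cost ▸ hβ) (hc S₀).le
    (fun S hS ↦ hmin ⟨S, (mem_filter.1 hS).2, rfl⟩) hxstar_nonneg (hx_cost ▸ hxstar_cost)
    (sum_filter (v ∈ Sets ·) xstar ▸ hxstar_cover) hxstar_supp
end

section
/- For every finite list of nonnegative reals q_1, …, q_k, it holds that 1 − ∏_{j=1}^k (1 − min(q_j, 1)) ≥ (1 − e^{−1})·min(Σ_{j=1}^k q_j, 1). -/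
open Finset

/-!
Since `1 - min x 1 ≤ exp (-x)`, the product is at most `exp (-S)` with `S = ∑ qⱼ`, hence at most
`exp (-min S 1)`. On `[0, 1]` Bernoulli's inequality for the power `(e⁻¹) ^ t = exp (-t)` puts it
below its chord `1 - (1 - e⁻¹) * t`; take `t = min S 1`.
-/

lemma one_sub_min_one_le_exp_neg (x : ℝ) : 1 - min x 1 ≤ Real.exp (-x) := by
  rw [← max_sub_sub_left, sub_self]
  exact max_le (Real.one_sub_le_exp_neg x) (Real.exp_pos _).le

lemma prod_one_sub_min_one_le_exp_neg_sum {ι : Type*} (s : Finset ι) (q : ι → ℝ) :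
    ∏ i ∈ s, (1 - min (q i) 1) ≤ Real.exp (-∑ i ∈ s, q i) := by
  rw [← sum_neg_distrib, Real.exp_sum]
  exact prod_le_prod (fun i _ ↦ sub_nonneg.2 (min_le_right _ _))
    fun i _ ↦ one_sub_min_one_le_exp_neg (q i)

lemma exp_mul_le_one_add_mul_exp_sub_one (a : ℝ) {t : ℝ} (ht₀ : 0 ≤ t) (ht₁ : t ≤ 1) :
    Real.exp (a * t) ≤ 1 + t * (Real.exp a - 1) := by
  have bernoulli : (1 + (Real.exp a - 1)) ^ t ≤ 1 + t * (Real.exp a - 1) :=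
    rpow_one_add_le_one_add_mul_self (by linarith [Real.exp_pos a]) ht₀ ht₁
  rwa [add_sub_cancel, ← Real.exp_mul] at bernoulli

theorem stmt_6_general {ι : Type*} (s : Finset ι) (q : ι → ℝ) (hq : 0 ≤ ∑ i ∈ s, q i) :
    (1 - (Real.exp 1)⁻¹) * min (∑ i ∈ s, q i) 1 ≤ 1 - ∏ i ∈ s, (1 - min (q i) 1) := by
  set t := min (∑ i ∈ s, q i) 1
  have hprod : ∏ i ∈ s, (1 - min (q i) 1) ≤ 1 - (1 - (Real.exp 1)⁻¹) * t :=
    calc ∏ i ∈ s, (1 - min (q i) 1)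
      _ ≤ Real.exp (-∑ i ∈ s, q i) := prod_one_sub_min_one_le_exp_neg_sum s q
      _ ≤ Real.exp (-1 * t) := by
        rw [neg_one_mul]
        exact Real.exp_le_exp.2 (neg_le_neg (min_le_left _ _))
      _ ≤ 1 + t * (Real.exp (-1) - 1) :=
        exp_mul_le_one_add_mul_exp_sub_one (-1) (le_min hq zero_le_one) (min_le_right _ _)
      _ = 1 - (1 - (Real.exp 1)⁻¹) * t := by
        rw [Real.exp_neg]
        ring
  exact le_sub_comm.1 hprod

/-- For nonnegative reals `q₁, …, q_k`:
`1 − ∏ⱼ (1 − min(qⱼ,1)) ≥ (1 − e⁻¹)·min(∑ⱼ qⱼ, 1)`. -/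
theorem stmt_6 (k : ℕ) (q : Fin k → ℝ) (hq : ∀ j, 0 ≤ q j) :
    1 - ∏ j, (1 - min (q j) 1) ≥ (1 - (Real.exp 1)⁻¹) * min (∑ j, q j) 1 :=
  stmt_6_general univ q (sum_nonneg fun j _ ↦ hq j)
end

section
/- Let c ∈ ℝ^m with c_j > 0 for all j, let β > 0, and let x ∈ ℝ^m_{≥0} satisfy ⟨c, x⟩ = β. Let a ∈ [0,1]^m be a row with a_j > 0 for at least one j, let Δ ∈ (0, 1], and set κ := Δ·min{c_j/a_j : a_j > 0}. Suppose ⟨a, x⟩ < Δ. Define x' by x'_j := x_j·exp(κ·a_j/c_j)/Z, where Z := (1/β)·Σ_j c_j·x_j·exp(κ·a_j/c_j). Then for every x* ∈ ℝ^m_{≥0} with ⟨c, x*⟩ ≤ β, ⟨a, x*⟩ ≥ 1, and x*_j = 0 whenever x_j = 0, it holds that KL_c(x* ‖ x') − KL_c(x* ‖ x) ≤ (e−1)·κ·⟨a, x⟩ − κ. -/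
open Finset Real

/-! Write `u_j = κ a_j / c_j ∈ [0, 1]`. Since the update preserves the cost, the change in
divergence is exactly `log Z · ⟨c, x*⟩ − κ ⟨a, x*⟩`. As `Z ≥ 1`, the first term is at most
`β log Z ≤ β (Z − 1) = ∑ c_j x_j (exp u_j − 1)`, and bounding `exp` by its chord on `[0, 1]`
turns this into `(e − 1) κ ⟨a, x⟩`. -/

section MultiplicativeWeights

variable {ι : Type*} [Fintype ι] {c x u : ι → ℝ}

/-- The factor `Z` by which scaling each `x j` by `exp (u j)` changes the cost `⟨c, x⟩`; it has the
junk value `0` when that cost is `0`. -/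
noncomputable def multWeightsNormalizer (c x u : ι → ℝ) : ℝ :=
  (∑ j, c j * x j * exp (u j)) / ∑ j, c j * x j

/-- The multiplicative-weights update of `x` with exponents `u`, renormalized to have the same cost
`⟨c, x⟩` as `x`. -/
noncomputable def multWeightsUpdate (c x u : ι → ℝ) (j : ι) : ℝ :=
  x j * exp (u j) / multWeightsNormalizer c x u

lemma multWeightsNormalizer_mul_cost (hcost : ∑ j, c j * x j ≠ 0) :
    multWeightsNormalizer c x u * ∑ j, c j * x j = ∑ j, c j * x j * exp (u j) :=
  div_mul_cancel₀ _ hcost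

lemma cost_multWeightsUpdate (hZ : multWeightsNormalizer c x u ≠ 0) :
    ∑ j, c j * multWeightsUpdate c x u j = ∑ j, c j * x j := by
  have hcost : ∑ j, c j * x j ≠ 0 := (div_ne_zero_iff.1 hZ).2
  calc ∑ j, c j * multWeightsUpdate c x u j
      = (∑ j, c j * x j * exp (u j)) / multWeightsNormalizer c x u := by
        simp only [multWeightsUpdate, ← mul_div_assoc, ← mul_assoc, sum_div]
    _ = ∑ j, c j * x j := by
        rw [← multWeightsNormalizer_mul_cost hcost, mul_div_cancel_left₀ _ hZ]

lemma one_le_multWeightsNormalizer (hcost : 0 < ∑ j, c j * x j) (hc : ∀ j, 0 ≤ c j)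
    (hx : ∀ j, 0 ≤ x j) (hu : ∀ j, 0 ≤ u j) : 1 ≤ multWeightsNormalizer c x u :=
  (one_le_div hcost).2 <| sum_le_sum fun j _ =>
    le_mul_of_one_le_right (mul_nonneg (hc j) (hx j)) (one_le_exp (hu j))

lemma exp_sub_one_le_chord {t : ℝ} (ht : t ∈ Set.Icc (0 : ℝ) 1) :
    exp t - 1 ≤ (exp 1 - 1) * t := by
  have hchord := convexOn_exp.2 (Set.mem_univ 0) (Set.mem_univ 1) (sub_nonneg.2 ht.2) ht.1
    (sub_add_cancel 1 t)
  simp only [smul_eq_mul, mul_zero, mul_one, zero_add, exp_zero] at hchord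
  linarith

lemma multWeightsNormalizer_sub_one_mul_cost_le (hcost : ∑ j, c j * x j ≠ 0)
    (hc : ∀ j, 0 ≤ c j) (hx : ∀ j, 0 ≤ x j) (hu : ∀ j, u j ∈ Set.Icc (0 : ℝ) 1) :
    (multWeightsNormalizer c x u - 1) * ∑ j, c j * x j ≤
      (exp 1 - 1) * ∑ j, c j * x j * u j := by
  calc (multWeightsNormalizer c x u - 1) * ∑ j, c j * x j
      = ∑ j, c j * x j * (exp (u j) - 1) := by
        simp only [sub_one_mul, mul_sub_one, sum_sub_distrib, multWeightsNormalizer_mul_cost hcost]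
    _ ≤ ∑ j, c j * x j * ((exp 1 - 1) * u j) := sum_le_sum fun j _ =>
        mul_le_mul_of_nonneg_left (exp_sub_one_le_chord (hu j)) (mul_nonneg (hc j) (hx j))
    _ = (exp 1 - 1) * ∑ j, c j * x j * u j := by
        simp only [mul_sum, mul_left_comm]

end MultiplicativeWeights

lemma log_div_mul_exp_div {s y t Z : ℝ} (hs : s ≠ 0) (hy : y ≠ 0) (hZ : Z ≠ 0) :
    log (s / (y * exp t / Z)) = log (s / y) + log Z - t := by
  rw [log_div hs (by positivity), log_div (by positivity) hZ, log_mul hy (exp_ne_zero t), log_exp,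
    log_div hs hy]
  ring

section Divergence

variable {m : ℕ} {c x u s : Fin m → ℝ}

lemma wKL_multWeightsUpdate_sub_wKL (hZ : multWeightsNormalizer c x u ≠ 0)
    (hs : ∀ j, x j = 0 → s j = 0) :
    wKL c s (multWeightsUpdate c x u) - wKL c s x =
      log (multWeightsNormalizer c x u) * ∑ j, c j * s j - ∑ j, c j * s j * u j := by
  set Z := multWeightsNormalizer c x u
  set x' := multWeightsUpdate c x u
  have hlog (j) : s j * log (s j / x' j) = s j * (log (s j / x j) + log Z - u j) := by
    by_cases hsj : s j = 0
    · simp only [hsj, zero_mul]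
    · exact congrArg (s j * ·) (log_div_mul_exp_div hsj (mt (hs j) hsj) hZ)
  calc wKL c s x' - wKL c s x
      = ∑ j, (log Z * (c j * s j) - c j * s j * u j + (c j * x' j - c j * x j)) := by
        rw [wKL, wKL, ← sum_sub_distrib]
        refine sum_congr rfl fun j _ => ?_
        rw [hlog j]
        ring
    _ = log Z * ∑ j, c j * s j - ∑ j, c j * s j * u j := by
        rw [sum_add_distrib, sum_sub_distrib, sum_sub_distrib, cost_multWeightsUpdate hZ,
          sub_self, add_zero, mul_sum]

lemma wKL_multWeightsUpdate_sub_wKL_le (hcost : 0 < ∑ j, c j * x j) (hc : ∀ j, 0 ≤ c j)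
    (hx : ∀ j, 0 ≤ x j) (hu : ∀ j, u j ∈ Set.Icc (0 : ℝ) 1) (hs : ∀ j, x j = 0 → s j = 0)
    (hs_cost : ∑ j, c j * s j ≤ ∑ j, c j * x j) :
    wKL c s (multWeightsUpdate c x u) - wKL c s x ≤
      (exp 1 - 1) * ∑ j, c j * x j * u j - ∑ j, c j * s j * u j := by
  have hZ_one := one_le_multWeightsNormalizer hcost hc hx fun j => (hu j).1
  have hZ_pos := zero_lt_one.trans_le hZ_one
  rw [wKL_multWeightsUpdate_sub_wKL hZ_pos.ne' hs]
  refine sub_le_sub_right ?_ _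
  calc log (multWeightsNormalizer c x u) * ∑ j, c j * s j
      ≤ log (multWeightsNormalizer c x u) * ∑ j, c j * x j :=
        mul_le_mul_of_nonneg_left hs_cost (log_nonneg hZ_one)
    _ ≤ (multWeightsNormalizer c x u - 1) * ∑ j, c j * x j :=
        mul_le_mul_of_nonneg_right (log_le_sub_one_of_pos hZ_pos) hcost.le
    _ ≤ (exp 1 - 1) * ∑ j, c j * x j * u j :=
        multWeightsNormalizer_sub_one_mul_cost_le hcost.ne' hc hx hu

end Divergence

lemma mul_le_of_mem_lowerBounds_div {ι : Type*} {c a : ι → ℝ} {t : ℝ}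
    (ht : t ∈ lowerBounds {r : ℝ | ∃ j, 0 < a j ∧ c j / a j = r}) {j : ι} (hcj : 0 ≤ c j)
    (haj : 0 ≤ a j) : t * a j ≤ c j := by
  rcases haj.eq_or_lt with haj_zero | haj_pos
  · rwa [← haj_zero, mul_zero]
  · exact (le_div_iff₀ haj_pos).1 (ht ⟨j, haj_pos, rfl⟩)

theorem stmt_8_general {m : ℕ} {c : Fin m → ℝ} (hc : ∀ j, 0 < c j) {β : ℝ} (hβ : 0 < β)
    {x : Fin m → ℝ} (hx_nonneg : ∀ j, 0 ≤ x j) (hx_cost : ∑ j, c j * x j = β)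
    {a : Fin m → ℝ} (ha : ∀ j, 0 ≤ a j) {κ : ℝ} (hκ : 0 ≤ κ) (hκa : ∀ j, κ * a j ≤ c j)
    {Z : ℝ} (hZ : Z = (1 / β) * ∑ j, c j * x j * exp (κ * a j / c j))
    {x' : Fin m → ℝ} (hx' : ∀ j, x' j = x j * exp (κ * a j / c j) / Z)
    {xstar : Fin m → ℝ} (hxstar_nonneg : ∀ j, 0 ≤ xstar j)
    (hxstar_cost : ∑ j, c j * xstar j ≤ β) (hxstar_supp : ∀ j, x j = 0 → xstar j = 0) :
    wKL c xstar x' - wKL c xstar x ≤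
      (exp 1 - 1) * κ * (∑ j, a j * x j) - κ * ∑ j, a j * xstar j := by
  subst hx_cost
  have hZ_eq : Z = multWeightsNormalizer c x fun j => κ * a j / c j := by
    rw [hZ, one_div_mul_eq_div, multWeightsNormalizer]
  obtain rfl : x' = multWeightsUpdate c x fun j => κ * a j / c j :=
    funext fun j => by rw [hx', hZ_eq, multWeightsUpdate]
  have hu (j) : κ * a j / c j ∈ Set.Icc (0 : ℝ) 1 :=
    ⟨div_nonneg (mul_nonneg hκ (ha j)) (hc j).le, div_le_one_of_le₀ (hκa j) (hc j).le⟩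
  have hrow (y : Fin m → ℝ) : ∑ j, c j * y j * (κ * a j / c j) = κ * ∑ j, a j * y j := by
    rw [mul_sum]
    refine sum_congr rfl fun j _ => ?_
    have hcj : c j ≠ 0 := (hc j).ne'
    field_simp
  simpa only [hrow, ← mul_assoc] using
    wKL_multWeightsUpdate_sub_wKL_le hβ (fun j => (hc j).le) hx_nonneg hu hxstar_supp hxstar_cost

/-- Change in KL under the multiplicative-weights update of `LearnOrCoverCIP` upon
arrival of a constraint row `a` with deficit `Δ` and `⟨a,x⟩ < Δ`, where
`κ = Δ·min{cⱼ/aⱼ : aⱼ > 0}`: `KL_c(x* ‖ x') − KL_c(x* ‖ x) ≤ (e−1)·κ·⟨a,x⟩ − κ`. -/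
theorem stmt_8 (m : ℕ) (c : Fin m → ℝ) (hc : ∀ j, 0 < c j) (β : ℝ) (hβ : 0 < β)
    (x : Fin m → ℝ) (hx_nonneg : ∀ j, 0 ≤ x j) (hx_cost : ∑ j, c j * x j = β)
    (a : Fin m → ℝ) (ha : ∀ j, a j ∈ Set.Icc (0 : ℝ) 1) (ha_pos : ∃ j, 0 < a j)
    (Δ : ℝ) (hΔ : Δ ∈ Set.Ioc (0 : ℝ) 1)
    (κ0 : ℝ) (hκ0 : IsLeast {r : ℝ | ∃ j, 0 < a j ∧ c j / a j = r} κ0)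
    (κ : ℝ) (hκ : κ = Δ * κ0)
    (hax : ∑ j, a j * x j < Δ)
    (Z : ℝ) (hZ : Z = (1 / β) * ∑ j, c j * x j * Real.exp (κ * a j / c j))
    (x' : Fin m → ℝ) (hx' : ∀ j, x' j = x j * Real.exp (κ * a j / c j) / Z)
    (xstar : Fin m → ℝ) (hxstar_nonneg : ∀ j, 0 ≤ xstar j)
    (hxstar_cost : ∑ j, c j * xstar j ≤ β)
    (hxstar_cover : 1 ≤ ∑ j, a j * xstar j)
    (hxstar_supp : ∀ j, x j = 0 → xstar j = 0) :
    wKL c xstar x' - wKL c xstar x ≤ (Real.exp 1 - 1) * κ * (∑ j, a j * x j) - κ := by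
  have hκ0_nonneg : 0 ≤ κ0 := by
    obtain ⟨j, haj, rfl⟩ := hκ0.1
    exact div_nonneg (hc j).le haj.le
  have hκ_nonneg : 0 ≤ κ := hκ ▸ mul_nonneg hΔ.1.le hκ0_nonneg
  have hκ_le : κ ≤ κ0 := hκ ▸ mul_le_of_le_one_left hκ0_nonneg hΔ.2
  have hκa (j) : κ * a j ≤ c j :=
    mul_le_of_mem_lowerBounds_div (lowerBounds_mono_mem hκ_le hκ0.2) (hc j).le (ha j).1
  calc wKL c xstar x' - wKL c xstar x
      ≤ (exp 1 - 1) * κ * (∑ j, a j * x j) - κ * ∑ j, a j * xstar j :=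
        stmt_8_general hc hβ hx_nonneg hx_cost (fun j => (ha j).1) hκ_nonneg hκa hZ hx'
          hxstar_nonneg hxstar_cost hxstar_supp
    _ ≤ (exp 1 - 1) * κ * (∑ j, a j * x j) - κ :=
        sub_le_sub_left (le_mul_of_one_le_right hκ_nonneg hxstar_cover) _
end

section
/- Let H_n := Σ_{i=1}^n 1/i denote the n-th harmonic number, with H_0 := 0. Let (C_N)_{N ≥ 0} be a sequence of reals with C_0 = 0 and, for every N ≥ 1, C_N = 1 + (1/N)·Σ_{n=0}^{N−1} (H_N − H_n)·C_n. Then C_N ≥ H_N/2 for every N ≥ 1. -/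
open Finset

/-!
With nonnegative weights `(H N - H n) / N`, every subsolution of the recurrence stays below every
supersolution, by strong induction. The sequence `H / 2` is a subsolution: substituting it in the
right-hand side gives `(1 + 1 / N) * (H N / 2)`, because `∑ n < N, (H N - H n) * H n` has the closed
form `(N + 1) * H N - 2 * N`.
-/

lemma subsolution_le_supersolution {R : Type*} [Semiring R] [PartialOrder R] [IsOrderedRing R]
    {a f g : ℕ → R} {w : ℕ → ℕ → R} (hw : ∀ N, ∀ n < N, 0 ≤ w N n) (h0 : f 0 ≤ g 0)
    (hf : ∀ N, N ≠ 0 → f N ≤ a N + ∑ n ∈ range N, w N n * f n)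
    (hg : ∀ N, N ≠ 0 → a N + ∑ n ∈ range N, w N n * g n ≤ g N) : f ≤ g := by
  intro N
  induction N using Nat.strong_induction_on with
  | _ N ih =>
    rcases eq_or_ne N 0 with rfl | hN
    · exact h0
    calc
      f N ≤ a N + ∑ n ∈ range N, w N n * f n := hf N hN
      _ ≤ a N + ∑ n ∈ range N, w N n * g n := by
        gcongr with n hn
        · exact hw N n (mem_range.1 hn)
        · exact ih n (mem_range.1 hn)
      _ ≤ g N := hg N hN

lemma harmonic_mono : Monotone harmonic :=
  monotone_nat_of_le_succ fun n ↦ by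
    rw [harmonic_succ]
    exact le_add_of_nonneg_right (by positivity)

lemma harmonic_nonneg (n : ℕ) : 0 ≤ harmonic n :=
  harmonic_mono n.zero_le

lemma sum_range_harmonic (N : ℕ) : ∑ n ∈ range N, harmonic n = N * harmonic N - N := by
  induction N with
  | zero => simp
  | succ N ih =>
    rw [sum_range_succ, ih, harmonic_succ]
    push_cast
    field_simp
    ring

lemma sum_range_harmonic_sub_mul_harmonic (N : ℕ) :
    ∑ n ∈ range N, (harmonic N - harmonic n) * harmonic n = (N + 1) * harmonic N - 2 * N := by
  induction N with
  | zero => simp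
  | succ N ih =>
    have increment : ∑ n ∈ range (N + 1), (harmonic (N + 1) - harmonic n) * harmonic n =
        ∑ n ∈ range N, (harmonic N - harmonic n) * harmonic n +
          (↑(N + 1))⁻¹ * ∑ n ∈ range (N + 1), harmonic n := by
      simp only [harmonic_succ, sum_range_succ, mul_add, mul_sum, ← add_assoc, ← sum_add_distrib]
      congr 1
      · exact sum_congr rfl fun n _ ↦ by ring
      · ring
    rw [increment, ih, sum_range_harmonic, harmonic_succ]
    push_cast
    field_simp
    ring

lemma one_add_sum_harmonic_sub_mul_half_harmonic {N : ℕ} (hN : N ≠ 0) :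
    1 + ∑ n ∈ range N, 1 / N * (harmonic N - harmonic n) * (harmonic n / 2) =
      (1 + 1 / N) * (harmonic N / 2) := by
  calc
    _ = 1 + 1 / (2 * N) * ∑ n ∈ range N, (harmonic N - harmonic n) * harmonic n := by
      rw [mul_sum]
      congr 1
      exact sum_congr rfl fun n _ ↦ by ring
    _ = (1 + 1 / N) * (harmonic N / 2) := by
      rw [sum_range_harmonic_sub_mul_harmonic]
      field_simp
      ring

lemma half_harmonic_le_one_add_sum {N : ℕ} (hN : N ≠ 0) :
    harmonic N / 2 ≤
      1 + ∑ n ∈ range N, 1 / N * (harmonic N - harmonic n) * (harmonic n / 2) := by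
  rw [one_add_sum_harmonic_sub_mul_half_harmonic hN]
  exact le_mul_of_one_le_left (div_nonneg (harmonic_nonneg N) zero_le_two)
    (le_add_of_nonneg_right (by positivity))

theorem stmt_12_general {K : Type*} [Field K] [LinearOrder K] [IsStrictOrderedRing K]
    (C : ℕ → K) (hC0 : 0 ≤ C 0)
    (hC : ∀ N : ℕ, 1 ≤ N →
      1 + (1 / (N : K)) * ∑ n ∈ range N, ((harmonic N : K) - harmonic n) * C n ≤ C N)
    (N : ℕ) : (harmonic N : K) / 2 ≤ C N := by
  refine subsolution_le_supersolution (a := 1) (f := fun n ↦ (harmonic n : K) / 2)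
    (w := fun N n ↦ 1 / (N : K) * (harmonic N - harmonic n)) ?weights ?initial ?sub ?super N
  case weights =>
    intro N n hn
    have : (harmonic n : K) ≤ harmonic N := by exact_mod_cast harmonic_mono hn.le
    exact mul_nonneg (by positivity) (sub_nonneg.2 this)
  case initial => simpa using hC0
  case sub =>
    intro N hN
    simpa using (Rat.cast_le (K := K)).2 (half_harmonic_le_one_add_sum hN)
  case super =>
    intro N hN
    simpa only [mul_sum, mul_assoc, Pi.one_apply] using hC N (Nat.one_le_iff_ne_zero.2 hN)

/-- If `C 0 = 0` and `C N = 1 + (1/N)·∑_{n=0}^{N−1} (H_N − H_n)·C n` for all `N ≥ 1`,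
where `H` is the harmonic number sequence (`H 0 = 0`), then `C N ≥ H N / 2` for `N ≥ 1`. -/
theorem stmt_12 (H : ℕ → ℝ) (hH : ∀ n, H n = ∑ i ∈ Finset.range n, (1 : ℝ) / (i + 1))
    (C : ℕ → ℝ) (hC0 : C 0 = 0)
    (hC : ∀ N : ℕ, 1 ≤ N →
      C N = 1 + (1 / (N : ℝ)) * ∑ n ∈ Finset.range N, (H N - H n) * C n) :
    ∀ N : ℕ, 1 ≤ N → C N ≥ H N / 2 := by
  obtain rfl : H = fun n ↦ (harmonic n : ℝ) := funext fun n ↦ by simp [hH, harmonic]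
  exact fun N _ ↦ stmt_12_general C hC0.ge (fun N hN ↦ (hC N hN).ge) N
end
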